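/- Let d ≥ 1 and 1 < p ≤ 2. There exists a constant C > 0 such that for every Schwartz function f on ℝ^d: ‖f‖_{L^p(ℝ^d)} ≤ C·‖V_g f‖_{L^p(ℝ^{2d})}. -/

import Mathlib

open MeasureTheory Complex Real
open scoped ENNReal RealInnerProductSpace

noncomputable section

abbrev E (d : ℕ) : Type := EuclideanSpace ℝ (Fin d)

/-- Phase space `ℝ^{2d} = ℝ^d × ℝ^d`. -/
abbrev P (d : ℕ) : Type := E d × E d

/-- The complex conjugate of the wave packet `π(z)g`, Gaussian window `g(y)=exp(-|y|²/2)`: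
`conj (π(z)g) (y) = exp(-i y·ξ)·g(y-x)` for `z = (x,ξ)`. -/
def pkbar (d : ℕ) (z : P d) (y : E d) : ℂ :=
  Complex.exp (-Complex.I * (⟪y, z.2⟫ : ℂ)) * Real.exp (-‖y - z.1‖ ^ 2 / 2)

/-- The short-time Fourier transform with Gaussian window:
`V_g u (x,ξ) = ∫ u(y)·conj(g(y-x))·exp(-i y·ξ) dy`. -/
def stft (d : ℕ) (u : E d → ℂ) (z : P d) : ℂ := ∫ y, u y * pkbar d z y

section Helpers

open scoped SchwartzMap FourierTransform

theorem memLp_of_integrable_of_le_one {α : Type*} [MeasurableSpace α] {μ : Measure α} {γ : α → ℝ}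
    (hint : Integrable γ μ) (h0 : ∀ y, 0 ≤ γ y) (h1 : ∀ y, γ y ≤ 1) {r : ℝ} (hr : 1 ≤ r) :
    MemLp γ (ENNReal.ofReal r) μ := by
  have hr0 : 0 < r := by linarith
  rw [← integrable_norm_rpow_iff hint.1 (by simpa using hr0) ENNReal.ofReal_ne_top,
    ENNReal.toReal_ofReal hr0.le]
  refine hint.mono' (hint.1.norm.aemeasurable.pow_const r).aestronglyMeasurable
    (.of_forall fun y => ?_)
  rw [Real.norm_of_nonneg (by positivity), Real.norm_of_nonneg (h0 y)]
  exact (Real.rpow_le_rpow_of_exponent_ge' (h0 y) (h1 y) zero_le_one hr).trans (Real.rpow_one _).le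

variable {V : Type*} [NormedAddCommGroup V] [InnerProductSpace ℝ V]

theorem hasTemperateGrowth_exp_neg_norm_sub_sq (x : V) :
    (fun y : V => Real.exp (-‖y - x‖ ^ 2 / 2)).HasTemperateGrowth := by
  have hinner : (fun y : V => -‖y - x‖ ^ 2 / 2).HasTemperateGrowth := by
    have hsq : (fun y : V => ‖y - x‖ ^ 2).HasTemperateGrowth :=
      (Function.hasTemperateGrowth_norm_sq (H := V)).comp
        (Function.HasTemperateGrowth.id'.sub (.const x))
    have heq : (fun y : V => -‖y - x‖ ^ 2 / 2) = fun y => (-1 / 2 : ℝ) * ‖y - x‖ ^ 2 := by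
      ext y; ring
    rw [heq]
    exact (Function.HasTemperateGrowth.const (-1 / 2 : ℝ)).mul hsq
  refine Function.HasTemperateGrowth.comp' (g := Real.exp) (t := Set.Iic 0) ?_
    (uniqueDiffOn_Iic 0) Real.contDiff_exp.contDiffOn (fun N => ⟨0, 1, zero_le_one, ?_⟩) hinner
  · rintro _ ⟨y, rfl⟩
    have := sq_nonneg ‖y - x‖
    simp only [Set.mem_Iic]
    linarith
  · intro n _ t ht
    rw [iteratedFDerivWithin_eq_iteratedFDeriv (uniqueDiffOn_Iic 0)
      (Real.contDiff_exp.contDiffAt) ht, norm_iteratedFDeriv_eq_norm_iteratedDeriv,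
      iteratedDeriv_eq_iterate, Real.iter_deriv_exp]
    simpa using ht

variable [MeasurableSpace V] [BorelSpace V] [FiniteDimensional ℝ V]

theorem integral_norm_fourier_rpow_le (K : 𝓢(V, ℂ)) {q M : ℝ} (hq : 2 ≤ q) (hM : 0 ≤ M)
    (hK1 : ∫ y, ‖K y‖ ≤ M) (hK2 : ∫ y, ‖K y‖ ^ 2 ≤ M ^ 2) :
    ∫ w, ‖𝓕 K w‖ ^ q ≤ M ^ q := by
  have hsplit : ∀ t : ℝ, 0 ≤ t → t ^ q = t ^ (q - 2) * t ^ 2 := fun t ht => by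
    rw [← Real.rpow_natCast, ← Real.rpow_add_of_nonneg ht (by linarith) (by norm_num)]
    norm_num
  have hsup : ∀ w, ‖𝓕 K w‖ ≤ M := fun w => by
    refine le_trans ?_ hK1
    rw [SchwartzMap.fourier_coe, Real.fourier_eq]
    refine (norm_integral_le_integral_norm _).trans_eq ?_
    simp
  have hint2 : Integrable (fun w => ‖𝓕 K w‖ ^ 2) :=
    ((𝓕 K).memLp 2).integrable_norm_pow (by norm_num)
  calc ∫ w, ‖𝓕 K w‖ ^ q ≤ ∫ w, M ^ (q - 2) * ‖𝓕 K w‖ ^ 2 := by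
        refine integral_mono_of_nonneg (.of_forall fun w => by positivity)
          (hint2.const_mul _) (.of_forall fun w => ?_)
        simp only
        rw [hsplit _ (norm_nonneg _)]
        exact mul_le_mul_of_nonneg_right (Real.rpow_le_rpow (norm_nonneg _) (hsup w)
          (by linarith)) (sq_nonneg _)
    _ = M ^ (q - 2) * ∫ y, ‖K y‖ ^ 2 := by
        rw [integral_const_mul, SchwartzMap.integral_norm_sq_fourier]
    _ ≤ M ^ q := by
        rw [hsplit M hM]
        gcongr

/-- Windowing `f` thrice by `γ` costs at most the `L^p` norm of the Fourier transform of `γ f`,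
with a constant that depends on `γ` only through its integral. -/
theorem integral_norm_rpow_mul_le (f : 𝓢(V, ℂ)) {γ : V → ℝ} (hγ : γ.HasTemperateGrowth)
    (hint : Integrable γ) (h0 : ∀ y, 0 ≤ γ y) (h1 : ∀ y, γ y ≤ 1) {p : ℝ} (hp1 : 1 < p)
    (hp2 : p ≤ 2) {G : ℝ} (hG1 : 1 ≤ G) (hG : ∫ y, γ y ≤ G ^ 2) :
    ∫ y, ‖f y‖ ^ p * γ y ^ (3 * p) ≤
      G ^ (p + 2) * ∫ w, ‖𝓕 (SchwartzMap.smulLeftCLM ℂ γ f) w‖ ^ p := by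
  have hp0 : 0 < p := by linarith
  have hG0 : 0 < G := by linarith
  have hmem : ∀ r : ℝ, 1 ≤ r → MemLp γ (ENNReal.ofReal r) := fun r hr =>
    memLp_of_integrable_of_le_one hint h0 h1 hr
  set F := SchwartzMap.smulLeftCLM ℂ γ f with hF
  set H := SchwartzMap.smulLeftCLM ℂ γ F with hH
  set K := SchwartzMap.smulLeftCLM ℂ γ H with hK
  have hFa : ∀ y, F y = γ y * f y := fun y => by
    simp [hF, SchwartzMap.smulLeftCLM_apply_apply hγ]
  have hHa : ∀ y, H y = γ y * F y := fun y => by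
    simp [hH, SchwartzMap.smulLeftCLM_apply_apply hγ]
  have hKa : ∀ y, K y = γ y * H y := fun y => by
    simp [hK, SchwartzMap.smulLeftCLM_apply_apply hγ]
  have hKn : ∀ y, ‖K y‖ = ‖H y‖ * γ y := fun y => by
    rw [hKa, norm_mul, Complex.norm_real, Real.norm_of_nonneg (h0 y), mul_comm]
  have hHn : ∀ y, ‖H y‖ = ‖f y‖ * γ y ^ 2 := fun y => by
    rw [hHa, hFa, norm_mul, norm_mul, Complex.norm_real, Real.norm_of_nonneg (h0 y)]; ring
  have hint2 : Integrable (fun y => ‖H y‖ ^ 2) :=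
    (H.memLp 2).integrable_norm_pow (by norm_num)
  set N := Real.sqrt (∫ y, ‖H y‖ ^ 2) with hN
  have hN0 : 0 ≤ N := Real.sqrt_nonneg _
  have hNsq : N ^ 2 = ∫ y, ‖H y‖ ^ 2 := Real.sq_sqrt (by positivity)
  have hpow_le : ∀ r : ℝ, 1 ≤ r → ∫ y, γ y ^ r ≤ G ^ 2 := fun r hr => by
    refine le_trans (integral_mono_of_nonneg (.of_forall fun y => ?_) hint
      (.of_forall fun y => ?_)) hG
    · exact Real.rpow_nonneg (h0 y) _
    · exact (Real.rpow_le_rpow_of_exponent_ge' (h0 y) (h1 y) zero_le_one hr).trans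
        (Real.rpow_one _).le
  have hrpow_sq : ∀ t : ℝ, 0 ≤ t → (t ^ 2) ^ (1 / 2 : ℝ) = t := fun t ht => by
    rw [← Real.sqrt_eq_rpow, Real.sqrt_sq ht]
  have hK1 : ∫ y, ‖K y‖ ≤ N * G := by
    have h := integral_mul_le_Lp_mul_Lq_of_nonneg (μ := volume) Real.HolderConjugate.two_two
      (f := fun y => ‖H y‖) (g := γ) (.of_forall fun y => norm_nonneg (H y)) (.of_forall h0)
      (H.memLp (ENNReal.ofReal 2)).norm (hmem 2 (by norm_num))
    simp only [Real.rpow_two] at h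
    simp_rw [hKn]
    refine h.trans ?_
    rw [← hNsq, hrpow_sq N hN0]
    gcongr
    refine le_trans (Real.rpow_le_rpow (integral_nonneg fun y => sq_nonneg _) ?_ (by norm_num))
      (hrpow_sq G hG0.le).le
    simpa using hpow_le 2 (by norm_num)
  have hK2 : ∫ y, ‖K y‖ ^ 2 ≤ (N * G) ^ 2 := by
    calc ∫ y, ‖K y‖ ^ 2 ≤ ∫ y, ‖H y‖ ^ 2 := by
          refine integral_mono_of_nonneg (.of_forall fun y => by positivity) hint2
            (.of_forall fun y => ?_)
          simp only [hKn]
          exact pow_le_pow_left₀ (mul_nonneg (norm_nonneg _) (h0 y))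
            (mul_le_of_le_one_right (norm_nonneg _) (h1 y)) 2
      _ = N ^ 2 := hNsq.symm
      _ ≤ (N * G) ^ 2 := by
          gcongr
          exact le_mul_of_one_le_right hN0 hG1
  set q := p.conjExponent with hq
  have hpq : p.HolderConjugate q := Real.HolderConjugate.conjExponent hp1
  have hq2 : 2 ≤ q := by
    rw [hq, Real.conjExponent, le_div_iff₀ (by linarith)]
    linarith
  set A := (∫ w, ‖𝓕 F w‖ ^ p) ^ (1 / p) with hA
  have hA0 : 0 ≤ A := by positivity
  have hAp : A ^ p = ∫ w, ‖𝓕 F w‖ ^ p := by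
    rw [hA, ← Real.rpow_mul (by positivity), one_div_mul_cancel hp0.ne', Real.rpow_one]
  have hdual : N ^ 2 ≤ A * (N * G) := by
    have hpars : ((N ^ 2 : ℝ) : ℂ) = ∫ w, inner ℂ (𝓕 F w) (𝓕 K w) := by
      rw [SchwartzMap.integral_inner_fourier_fourier, hNsq]
      refine (integral_ofReal (𝕜 := ℂ)).symm.trans (integral_congr_ae (.of_forall fun y => ?_))
      have hconj : F y * starRingEnd ℂ (F y) = ((‖F y‖ : ℝ) : ℂ) ^ 2 := Complex.mul_conj' _
      simp only [hKa, hHa, RCLike.inner_apply, norm_mul, Complex.norm_real,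
        Real.norm_of_nonneg (h0 y)]
      change (((γ y * ‖F y‖) ^ 2 : ℝ) : ℂ) = _
      rw [mul_assoc, mul_assoc, hconj]
      push_cast
      ring
    calc N ^ 2 = ‖((N ^ 2 : ℝ) : ℂ)‖ := by
          rw [Complex.norm_real, Real.norm_of_nonneg (sq_nonneg _)]
      _ ≤ ∫ w, ‖𝓕 F w‖ * ‖𝓕 K w‖ := by
          rw [hpars]
          refine (norm_integral_le_integral_norm _).trans ?_
          refine integral_mono_of_nonneg (.of_forall fun y => by positivity) ?_
            (.of_forall fun y => norm_inner_le_norm _ _)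
          exact MemLp.integrable_mul (p := 2) (q := 2) ((𝓕 F).memLp 2).norm ((𝓕 K).memLp 2).norm
      _ ≤ A * (∫ w, ‖𝓕 K w‖ ^ q) ^ (1 / q) :=
          integral_mul_norm_le_Lp_mul_Lq hpq ((𝓕 F).memLp _) ((𝓕 K).memLp _)
      _ ≤ A * (N * G) := by
          gcongr
          refine (Real.rpow_le_rpow (by positivity) (integral_norm_fourier_rpow_le K hq2
            (by positivity) hK1 hK2) (by positivity)).trans_eq ?_
          rw [← Real.rpow_mul (by positivity), mul_one_div_cancel (by positivity), Real.rpow_one]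
  have hNA : N ≤ A * G := by
    rcases hN0.eq_or_lt with h | h
    · rw [← h]; positivity
    · nlinarith
  have hlow : ∫ y, ‖f y‖ ^ p * γ y ^ (3 * p) ≤ N ^ p * G ^ (2 : ℝ) := by
    have heq : ∀ y, ‖f y‖ ^ p * γ y ^ (3 * p) = ‖H y‖ ^ p * γ y ^ p := fun y => by
      rw [hHn, Real.mul_rpow (norm_nonneg _) (by positivity), mul_assoc,
        ← Real.mul_rpow (by positivity) (h0 y), ← pow_succ, Real.rpow_mul (h0 y)]
      norm_num
    simp_rw [heq]
    rcases hp2.eq_or_lt with rfl | hp2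
    · simp only [Real.rpow_two]
      calc ∫ y, ‖H y‖ ^ 2 * γ y ^ 2 ≤ ∫ y, ‖H y‖ ^ 2 := by
            refine integral_mono_of_nonneg (.of_forall fun y => by positivity) hint2
              (.of_forall fun y => ?_)
            exact mul_le_of_le_one_right (by positivity) (pow_le_one₀ (h0 y) (h1 y))
        _ = N ^ 2 := hNsq.symm
        _ ≤ N ^ 2 * G ^ 2 := le_mul_of_one_le_right (by positivity) (one_le_pow₀ hG1)
    · have hconj : (2 / p).HolderConjugate (2 / (2 - p)) := by
        rw [Real.holderConjugate_iff]
        refine ⟨by rw [lt_div_iff₀ hp0]; linarith, ?_⟩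
        have : 2 - p ≠ 0 := by linarith
        field_simp
        ring
      have hr : 1 ≤ p * (2 / (2 - p)) := by
        rw [mul_div_assoc', le_div_iff₀ (by linarith)]
        linarith
      have hr1 : 1 ≤ 2 / (2 - p) := by
        rw [le_div_iff₀ (by linarith)]
        linarith
      have hr0 : 0 < 2 / (2 - p) := by linarith
      have h2p : 0 < 2 / p := by positivity
      have hmemH : MemLp (fun y => ‖H y‖ ^ p) (ENNReal.ofReal (2 / p)) := by
        rw [← integrable_norm_rpow_iff
          (H.continuous.norm.rpow_const fun y => .inr hp0.le).aestronglyMeasurable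
          (by simpa using h2p) ENNReal.ofReal_ne_top, ENNReal.toReal_ofReal h2p.le]
        refine hint2.congr (.of_forall fun y => ?_)
        simp only
        rw [Real.norm_of_nonneg (by positivity), ← Real.rpow_mul (norm_nonneg _),
          mul_div_cancel₀ _ hp0.ne', Real.rpow_two]
      have hmemγ : MemLp (fun y => γ y ^ p) (ENNReal.ofReal (2 / (2 - p))) := by
        refine memLp_of_integrable_of_le_one ?_ (fun y => Real.rpow_nonneg (h0 y) _)
          (fun y => Real.rpow_le_one (h0 y) (h1 y) hp0.le) hr1
        have := (hmem p hp1.le).integrable_norm_rpow (by simpa using hp0) ENNReal.ofReal_ne_top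
        simpa [ENNReal.toReal_ofReal hp0.le, abs_of_nonneg (h0 _)] using this
      have h := integral_mul_le_Lp_mul_Lq_of_nonneg (μ := volume) hconj
        (.of_forall fun y => by positivity)
        (.of_forall fun y => Real.rpow_nonneg (h0 y) _) hmemH hmemγ
      refine h.trans ?_
      simp_rw [← Real.rpow_mul (norm_nonneg _), ← Real.rpow_mul (h0 _),
        mul_div_cancel₀ _ hp0.ne', Real.rpow_two, ← hNsq]
      refine mul_le_mul ?_ ?_ (Real.rpow_nonneg (integral_nonneg fun y =>
        Real.rpow_nonneg (h0 y) _) _) (by positivity)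
      · rw [← Real.rpow_two, ← Real.rpow_mul hN0]
        apply le_of_eq
        congr 1
        field_simp
      · refine (Real.rpow_le_rpow (integral_nonneg fun y => Real.rpow_nonneg (h0 y) _)
          (hpow_le _ hr) (by positivity)).trans ?_
        refine (Real.rpow_le_rpow_of_exponent_le (one_le_pow₀ hG1) ?_).trans (Real.rpow_one _).le
        rw [div_le_one hr0]
        exact hr1
  calc ∫ y, ‖f y‖ ^ p * γ y ^ (3 * p) ≤ N ^ p * G ^ (2 : ℝ) := hlow
    _ ≤ (A * G) ^ p * G ^ (2 : ℝ) := by gcongr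
    _ = G ^ (p + 2) * ∫ w, ‖𝓕 F w‖ ^ p := by
        rw [Real.mul_rpow hA0 hG0.le, hAp, Real.rpow_add hG0]; ring


theorem one_add_pow_mul_exp_neg_sq_le (N : ℕ) {t : ℝ} (ht : 0 ≤ t) :
    (1 + t) ^ N * Real.exp (-t ^ 2 / 2) ≤ N.factorial * Real.exp 2 := by
  have h := Real.pow_div_factorial_le_exp (1 + t) (by linarith) N
  rw [div_le_iff₀ (by positivity)] at h
  calc (1 + t) ^ N * Real.exp (-t ^ 2 / 2)
      ≤ Real.exp (1 + t) * N.factorial * Real.exp (-t ^ 2 / 2) := by gcongr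
    _ = N.factorial * Real.exp (1 + t + -t ^ 2 / 2) := by rw [Real.exp_add (1 + t)]; ring
    _ ≤ N.factorial * Real.exp 2 := by
        gcongr
        nlinarith [sq_nonneg (t - 1)]

theorem integrable_one_add_norm_pow_mul (f : 𝓢(V, ℂ)) (N : ℕ) :
    Integrable fun y => (1 + ‖y‖) ^ N * ‖f y‖ := by
  simp_rw [add_comm (1 : ℝ), add_pow, one_pow, mul_one, Finset.sum_mul]
  refine integrable_finsetSum _ fun i _ => ?_
  refine ((f.integrable_pow_mul volume i).const_mul (N.choose i : ℝ)).congr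
    (.of_forall fun y => ?_)
  simp only
  ring

theorem exists_one_add_norm_pow_mul_integral_le (f : 𝓢(V, ℂ)) (a : ℝ) (N : ℕ) :
    ∃ A : ℝ, 0 ≤ A ∧ ∀ x : V,
      (1 + ‖x‖) ^ N * ∫ y, ‖f y‖ * Real.exp (-‖a • y - x‖ ^ 2 / 2) ≤ A := by
  set c : ℝ := (1 + |a|) ^ N * (N.factorial * Real.exp 2) with hc
  refine ⟨c * ∫ y, (1 + ‖y‖) ^ N * ‖f y‖, by positivity, fun x => ?_⟩
  rw [← integral_const_mul, ← integral_const_mul]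
  refine integral_mono_of_nonneg (.of_forall fun y => by positivity)
    ((integrable_one_add_norm_pow_mul f N).const_mul c) (.of_forall fun y => ?_)
  have hx : 1 + ‖x‖ ≤ (1 + |a|) * (1 + ‖y‖) * (1 + ‖a • y - x‖) := by
    have h : ‖x‖ ≤ |a| * ‖y‖ + ‖a • y - x‖ := by
      calc ‖x‖ = ‖a • y - (a • y - x)‖ := by rw [sub_sub_cancel]
        _ ≤ ‖a • y‖ + ‖a • y - x‖ := norm_sub_le _ _
        _ = |a| * ‖y‖ + ‖a • y - x‖ := by rw [norm_smul, Real.norm_eq_abs]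
    have h2 : 0 ≤ |a| := abs_nonneg a
    have h3 := norm_nonneg y
    have h4 := norm_nonneg (a • y - x)
    have h5 : 0 ≤ (|a| + ‖y‖ + |a| * ‖y‖) * ‖a • y - x‖ := by positivity
    nlinarith
  calc (1 + ‖x‖) ^ N * (‖f y‖ * Real.exp (-‖a • y - x‖ ^ 2 / 2))
      ≤ ((1 + |a|) * (1 + ‖y‖) * (1 + ‖a • y - x‖)) ^ N *
          (‖f y‖ * Real.exp (-‖a • y - x‖ ^ 2 / 2)) := by gcongr
    _ = (1 + |a|) ^ N * ((1 + ‖a • y - x‖) ^ N * Real.exp (-‖a • y - x‖ ^ 2 / 2)) *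
          ((1 + ‖y‖) ^ N * ‖f y‖) := by rw [mul_pow, mul_pow]; ring
    _ ≤ c * ((1 + ‖y‖) ^ N * ‖f y‖) := by
        rw [hc]
        exact mul_le_mul_of_nonneg_right (mul_le_mul_of_nonneg_left
          (one_add_pow_mul_exp_neg_sq_le N (norm_nonneg _)) (by positivity)) (by positivity)

theorem integrable_exp_neg_mul_norm_sq {b : ℝ} (hb : 0 < b) :
    Integrable fun y : V => Real.exp (-b * ‖y‖ ^ 2) := by
  have h := (GaussianFourier.integrable_cexp_neg_mul_sq_norm_add (V := V) (b := (b : ℂ))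
    (by simpa using hb) 0 0).norm
  refine h.congr (.of_forall fun y => ?_)
  simp only [Complex.norm_exp]
  congr 1
  simp [← Complex.ofReal_pow, ← Complex.ofReal_mul, ← Complex.ofReal_neg]

end Helpers

section STFT

open scoped SchwartzMap FourierTransform

variable {d : ℕ}

theorem norm_pkbar (z : P d) (y : E d) : ‖pkbar d z y‖ = Real.exp (-‖y - z.1‖ ^ 2 / 2) := by
  rw [pkbar, norm_mul, Complex.norm_exp, Complex.norm_real,
    Real.norm_of_nonneg (Real.exp_pos _).le]
  simp

theorem continuous_pkbar : Continuous fun q : P d × E d => pkbar d q.1 q.2 := by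
  unfold pkbar
  fun_prop

theorem integrable_exp_neg_norm_sub_sq (x : E d) :
    Integrable fun y : E d => Real.exp (-‖y - x‖ ^ 2 / 2) := by
  have h := (integrable_exp_neg_mul_norm_sq (V := E d) (b := 1 / 2) (by norm_num)).comp_sub_right x
  refine h.congr (.of_forall fun y => ?_)
  ring_nf

theorem integrable_pkbar (z : P d) : Integrable (pkbar d z) := by
  refine (integrable_exp_neg_norm_sub_sq z.1).mono'
    (continuous_pkbar.comp (Continuous.prodMk_right z)).aestronglyMeasurable
    (.of_forall fun y => (norm_pkbar z y).le)

theorem stronglyMeasurable_stft (f : 𝓢(E d, ℂ)) : StronglyMeasurable (stft d f) := by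
  have : Continuous fun q : P d × E d => f q.2 * pkbar d q.1 q.2 :=
    (f.continuous.comp continuous_snd).mul continuous_pkbar
  exact this.stronglyMeasurable.integral_prod_right'

theorem norm_stft_le (f : 𝓢(E d, ℂ)) (z : P d) :
    ‖stft d f z‖ ≤ ∫ y, ‖f y‖ * Real.exp (-‖y - z.1‖ ^ 2 / 2) := by
  refine (norm_integral_le_integral_norm _).trans_eq ?_
  simp_rw [norm_mul, norm_pkbar]

theorem norm_fourier_pkbar (z : P d) (w : E d) :
    ‖𝓕 (pkbar d z) w‖ =
      ‖(π / (1 / 2 : ℂ)) ^ (Module.finrank ℝ (E d) / 2 : ℂ)‖ *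
        Real.exp (-‖(2 * π) • w + z.2‖ ^ 2 / 2) := by
  set η : E d := (2 * π) • w + z.2 with hη
  have hval : 𝓕 (pkbar d z) w = Complex.exp (-Complex.I * (⟪z.1, η⟫ : ℂ)) *
      ∫ u : E d, Complex.exp (-(1 / 2 : ℂ) * ‖u‖ ^ 2 + -Complex.I * ⟪η, u⟫) := by
    rw [Real.fourier_eq', ← integral_const_mul, ← integral_add_right_eq_self _ z.1]
    congr 1
    ext u
    rw [pkbar, add_sub_cancel_right, Complex.ofReal_exp, smul_eq_mul, ← Complex.exp_add,
      ← Complex.exp_add, ← Complex.exp_add]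
    congr 1
    rw [hη]
    simp only [inner_add_left, inner_add_right, real_inner_smul_right, real_inner_comm u]
    push_cast
    ring
  rw [hval, GaussianFourier.integral_cexp_neg_mul_sq_norm_add (by norm_num), norm_mul, norm_mul,
    Complex.norm_exp, Complex.norm_exp]
  have h1 : (-Complex.I * (⟪z.1, η⟫ : ℂ)).re = 0 := by simp
  have h2 : ((-Complex.I) ^ 2 * (‖η‖ : ℂ) ^ 2 / (4 * (1 / 2))).re = -‖η‖ ^ 2 / 2 := by
    have : (-Complex.I) ^ 2 * (‖η‖ : ℂ) ^ 2 / (4 * (1 / 2)) = ((-‖η‖ ^ 2 / 2 : ℝ) : ℂ) := by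
      rw [neg_sq, Complex.I_sq]
      push_cast
      ring
    rw [this, Complex.ofReal_re]
  rw [h1, h2, Real.exp_zero, one_mul]

theorem norm_stft_le' (f : 𝓢(E d, ℂ)) (z : P d) :
    ‖stft d f z‖ ≤ ‖(π / (1 / 2 : ℂ)) ^ (Module.finrank ℝ (E d) / 2 : ℂ)‖ *
      ∫ w, ‖𝓕⁻ f w‖ * Real.exp (-‖(2 * π) • w - -z.2‖ ^ 2 / 2) := by
  set h : 𝓢(E d, ℂ) := 𝓕⁻ f with hh
  have hf : 𝓕 (h : E d → ℂ) = f := by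
    rw [hh, ← SchwartzMap.fourier_coe, FourierTransform.fourier_fourierInv_eq]
  have hswap : stft d f z = ∫ w, h w * 𝓕 (pkbar d z) w := by
    have := VectorFourier.integral_fourierIntegral_smul_eq_flip (μ := volume) (ν := volume)
      (L := innerₗ (E d)) (f := h) (g := pkbar d z)
      Real.continuous_fourierChar continuous_inner h.integrable (integrable_pkbar z)
    rw [flip_innerₗ] at this
    rw [stft, ← hf]
    exact this
  rw [hswap, ← integral_const_mul]
  refine (norm_integral_le_integral_norm _).trans_eq ?_
  simp_rw [norm_mul, norm_fourier_pkbar, sub_neg_eq_add]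
  congr 1
  ext w
  ring

theorem integrable_norm_stft_rpow (f : 𝓢(E d, ℂ)) {p : ℝ} (hp : 1 ≤ p) :
    Integrable fun z : P d => ‖stft d f z‖ ^ p := by
  have hp0 : 0 < p := by linarith
  set N : ℕ := 2 * (d + 1) with hN
  obtain ⟨A, hA0, hA⟩ := exists_one_add_norm_pow_mul_integral_le f 1 N
  obtain ⟨B, hB0, hB⟩ := exists_one_add_norm_pow_mul_integral_le (𝓕⁻ f) (2 * π) N
  set c := ‖(π / (1 / 2 : ℂ)) ^ (Module.finrank ℝ (E d) / 2 : ℂ)‖ with hc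
  simp only [one_smul] at hA
  set D := Real.sqrt (A * (c * B)) with hD
  have hbound : ∀ z : P d,
      ‖stft d f z‖ ≤ D * ((1 + ‖z.1‖) ^ (-((d : ℝ) + 1)) * (1 + ‖z.2‖) ^ (-((d : ℝ) + 1))) := by
    intro z
    have h1 : (1 + ‖z.1‖) ^ N * ‖stft d f z‖ ≤ A :=
      (mul_le_mul_of_nonneg_left (norm_stft_le f z) (by positivity)).trans (hA z.1)
    have h2 : (1 + ‖z.2‖) ^ N * ‖stft d f z‖ ≤ c * B := by
      refine (mul_le_mul_of_nonneg_left (norm_stft_le' f z) (by positivity)).trans ?_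
      rw [mul_left_comm]
      gcongr
      simpa using hB (-z.2)
    have hrpow : ∀ t : ℝ, 0 ≤ t → (1 + t) ^ (-((d : ℝ) + 1)) = ((1 + t) ^ (d + 1))⁻¹ := by
      intro t ht
      rw [Real.rpow_neg (by positivity)]
      norm_cast
    rw [hrpow _ (norm_nonneg _), hrpow _ (norm_nonneg _), ← mul_inv, ← div_eq_mul_inv,
      le_div_iff₀ (by positivity)]
    apply Real.le_sqrt_of_sq_le
    calc (‖stft d f z‖ * ((1 + ‖z.1‖) ^ (d + 1) * (1 + ‖z.2‖) ^ (d + 1))) ^ 2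
        = ((1 + ‖z.1‖) ^ N * ‖stft d f z‖) * ((1 + ‖z.2‖) ^ N * ‖stft d f z‖) := by
          rw [hN]; ring
      _ ≤ A * (c * B) := mul_le_mul h1 h2 (by positivity) hA0
  have hint : Integrable fun x : E d => (1 + ‖x‖) ^ (-(((d : ℝ) + 1) * p)) := by
    refine integrable_one_add_norm ?_
    rw [finrank_euclideanSpace_fin]
    nlinarith [(Nat.cast_nonneg d : (0 : ℝ) ≤ d)]
  refine ((hint.mul_prod hint).const_mul (D ^ p)).mono'
    ((stronglyMeasurable_stft f).norm.measurable.pow_const p).aestronglyMeasurable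
    (.of_forall fun z => ?_)
  rw [Real.norm_of_nonneg (by positivity)]
  refine (Real.rpow_le_rpow (norm_nonneg _) (hbound z) hp0.le).trans_eq ?_
  rw [Real.mul_rpow (by positivity) (by positivity), Real.mul_rpow (by positivity) (by positivity),
    ← Real.rpow_mul (by positivity), ← Real.rpow_mul (by positivity), neg_mul]

theorem stft_eq_fourier (f : 𝓢(E d, ℂ)) (x ξ : E d) :
    stft d f (x, ξ) = 𝓕 (SchwartzMap.smulLeftCLM ℂ
      (fun y : E d => Real.exp (-‖y - x‖ ^ 2 / 2)) f) ((2 * π)⁻¹ • ξ) := by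
  rw [SchwartzMap.fourier_coe, Real.fourier_eq', stft]
  congr 1
  ext y
  rw [SchwartzMap.smulLeftCLM_apply_apply (hasTemperateGrowth_exp_neg_norm_sub_sq x), pkbar,
    real_inner_smul_right, smul_eq_mul, Complex.real_smul]
  have hπ : -2 * π * ((2 * π)⁻¹ * ⟪y, ξ⟫) = -⟪y, ξ⟫ := by
    field_simp
  rw [hπ]
  push_cast
  ring_nf

end STFT

/-- the embedding `M^p ↪ L^p` for `1 < p ≤ 2`:
`‖f‖_{L^p(ℝ^d)} ≤ C·‖V_g f‖_{L^p(ℝ^{2d})}` for Schwartz `f`. -/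
theorem stmt5 (d : ℕ) (hd : 1 ≤ d) (p : ℝ) (hp1 : 1 < p) (hp2 : p ≤ 2) :
    ∃ C > (0 : ℝ), ∀ f : SchwartzMap (E d) ℂ,
      (∫ x : E d, ‖f x‖ ^ p) ^ (1 / p) ≤
        C * (∫ z : P d, ‖stft d (⇑f) z‖ ^ p) ^ (1 / p) := by
  have hp0 : 0 < p := by linarith
  have hb : 0 < 3 * p / 2 := by positivity
  set G : ℝ := 1 + ∫ y : E d, Real.exp (-‖y‖ ^ 2 / 2) with hG
  have hΓ : 0 ≤ ∫ y : E d, Real.exp (-‖y‖ ^ 2 / 2) := integral_nonneg fun y => (Real.exp_pos _).le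
  set g : E d → ℝ := fun y => Real.exp (-(3 * p / 2) * ‖y‖ ^ 2) with hg
  set c : ℝ := ∫ y, g y with hc
  have hc0 : 0 < c := by
    rw [hc, hg, GaussianFourier.integral_rexp_neg_mul_sq_norm hb]
    positivity
  have hgint : Integrable g := integrable_exp_neg_mul_norm_sq hb
  set κ : ℝ := G ^ (p + 2) * |((2 * π)⁻¹ ^ Module.finrank ℝ (E d))⁻¹|⁻¹ with hκ
  have hκ0 : 0 < κ := by positivity
  refine ⟨(κ / c) ^ (1 / p), by positivity, fun f => ?_⟩
  have hfint : Integrable fun y => ‖f y‖ ^ p := by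
    simpa [ENNReal.toReal_ofReal hp0.le] using (f.memLp (ENNReal.ofReal p)).integrable_norm_rpow
      (by simpa using hp0) ENNReal.ofReal_ne_top
  have hVint := integrable_norm_stft_rpow f hp1.le
  have hlocal : ∀ x : E d, (∫ y, ‖f y‖ ^ p * g (x - y)) ≤ κ * ∫ ξ, ‖stft d f (x, ξ)‖ ^ p := by
    intro x
    have h := integral_norm_rpow_mul_le f (hasTemperateGrowth_exp_neg_norm_sub_sq x)
      (integrable_exp_neg_norm_sub_sq x) (fun y => (Real.exp_pos _).le)
      (fun y => Real.exp_le_one_iff.2 (by have := sq_nonneg ‖y - x‖; linarith)) hp1 hp2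
      (G := G) (by linarith) (by
        rw [integral_sub_right_eq_self (fun y : E d => Real.exp (-‖y‖ ^ 2 / 2)) x]
        nlinarith)
    simp_rw [stft_eq_fourier]
    rw [Measure.integral_comp_smul volume (fun w => ‖(FourierTransform.fourier
      (SchwartzMap.smulLeftCLM ℂ (fun y : E d => Real.exp (-‖y - x‖ ^ 2 / 2)) f)) w‖ ^ p)
      ((2 * π)⁻¹), smul_eq_mul, hκ, mul_assoc, inv_mul_cancel_left₀ (by positivity)]
    refine le_trans (le_of_eq ?_) h
    congr 1
    ext y
    rw [hg, ← Real.exp_mul, norm_sub_rev]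
    ring_nf
  have hconv := integral_convolution (ContinuousLinearMap.mul ℝ ℝ) hfint hgint
  have hconv_int := hfint.integrable_convolution (ContinuousLinearMap.mul ℝ ℝ) hgint
  have hmain : (∫ y, ‖f y‖ ^ p) * c ≤ κ * ∫ z : P d, ‖stft d f z‖ ^ p := by
    rw [Measure.volume_eq_prod, integral_prod _ hVint, ← integral_const_mul κ]
    refine hconv.symm.le.trans ?_
    exact integral_mono hconv_int (hVint.integral_prod_left.const_mul κ) hlocal
  rw [← Real.mul_rpow (by positivity) (by positivity)]
  gcongr
  rw [div_mul_eq_mul_div, le_div_iff₀ hc0]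
  exact hmain
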